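/- (Lemma 1 of the paper, semantic form.) One step of Plotkin's decomposition rule produces an equivalent encoding: let t : L.Term ℕ, σ₁, σ₂ : ℕ → L.Term β, z : ℕ, f : L.Functions n, u, v : Fin n → L.Term β with σ₁ z = Term.func f u and σ₂ z = Term.func f v; let ζ : Fin n → ℕ be injective with ζ i ∉ t.varFinset for all i; let t' := t.subst (fun x => if x = z then Term.func f (fun i => Term.var (ζ i)) else Term.var x), and let σ₁', σ₂' : ℕ → L.Term β satisfy σ₁' (ζ i) = u i and σ₂' (ζ i) = v i for all i, and σ₁' x = σ₁ x and σ₂' x = σ₂ x for all x ∈ t.varFinset with x ≠ z. Then for every L-structure M and valuation v₀ : β → M, the denotation sets coincide: S(t,σ₁,σ₂) = S(t',σ₁',σ₂'). -/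

import Mathlib

open FirstOrder FirstOrder.Language

/-!
A valuation matching one of the two disjuncts is determined on the variables of `t`, so the
encoding denotes the pair of values of `tσ₁` and `tσ₂` under `v₀`. Decomposition preserves both
values: the term `f(z₁, …, zₙ)` put in place of `z` takes, under the new substitution, the value
that `z` had under the old one.
-/

section

variable {L : FirstOrder.Language} {α M : Type*} [DecidableEq α] [L.Structure M]

theorem realize_congr_of_eq_on_varFinset {t : L.Term α} {w w' : α → M}
    (h : ∀ x ∈ t.varFinset, w x = w' x) : t.realize w = t.realize w' := by
  have restrict_eq : w ∘ ((↑) : ↥(t.varFinset : Set α) → α) = w' ∘ (↑) :=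
    funext fun x => h x x.2
  rw [← Term.realize_restrictVar' subset_rfl (v := w), restrict_eq, Term.realize_restrictVar']

/-- The denotation `S(t, σ₁, σ₂)` of the matching-logic encoding `∃ z̄. t ∧ (φ^{σ₁} ∨ φ^{σ₂})` of
an antiunification problem. A substitution enters only through the valuation
`x ↦ (σᵢ x).realize v₀` it induces, so the definition takes these two valuations `a₁`, `a₂`. -/
def encodingDenotation (t : L.Term α) (a₁ a₂ : α → M) : Set M :=
  {m | ∃ w : α → M,
    ((∀ x ∈ t.varFinset, w x = a₁ x) ∨ (∀ x ∈ t.varFinset, w x = a₂ x)) ∧ t.realize w = m}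

theorem encodingDenotation_eq_pair (t : L.Term α) (a₁ a₂ : α → M) :
    encodingDenotation t a₁ a₂ = {t.realize a₁, t.realize a₂} := by
  ext m
  constructor
  · rintro ⟨w, h₁ | h₂, rfl⟩
    · exact Or.inl (realize_congr_of_eq_on_varFinset h₁)
    · exact Or.inr (realize_congr_of_eq_on_varFinset h₂)
  · rintro (rfl | rfl)
    · exact ⟨a₁, Or.inl fun _ _ => rfl, rfl⟩
    · exact ⟨a₂, Or.inr fun _ _ => rfl, rfl⟩

/-- The substitution `[f(ζ 0, …, ζ (n - 1))/z]` that Plotkin's decomposition rule applies to the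
generalization `t` of an antiunification problem. -/
def decompositionSubst (z : α) {n : ℕ} (f : L.Functions n) (ζ : Fin n → α) : α → L.Term α :=
  fun x => if x = z then Term.func f (fun i => Term.var (ζ i)) else Term.var x

theorem realize_subst_decompositionSubst {t : L.Term α} {z : α} {n : ℕ} {f : L.Functions n}
    {ζ : Fin n → α} {a a' : α → M} (hz : a z = Structure.funMap f (fun i => a' (ζ i)))
    (ha' : ∀ x ∈ t.varFinset, x ≠ z → a' x = a x) :
    (t.subst (decompositionSubst z f ζ)).realize a' = t.realize a := by
  rw [Term.realize_subst]
  refine realize_congr_of_eq_on_varFinset fun x hx => ?_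
  obtain rfl | hxz := eq_or_ne x z
  · simp [decompositionSubst, hz]
  · simp [decompositionSubst, hxz, ha' x hx hxz]

theorem plotkin_step_equiv_encoding_general {β : Type*} (t : L.Term α) (σ₁ σ₂ : α → L.Term β)
    (z : α) {n : ℕ} (f : L.Functions n) (u v : Fin n → L.Term β)
    (hσ₁ : σ₁ z = Term.func f u) (hσ₂ : σ₂ z = Term.func f v) (ζ : Fin n → α)
    (σ₁' σ₂' : α → L.Term β) (hσ₁'ζ : ∀ i, σ₁' (ζ i) = u i) (hσ₂'ζ : ∀ i, σ₂' (ζ i) = v i)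
    (hσ₁' : ∀ x ∈ t.varFinset, x ≠ z → σ₁' x = σ₁ x)
    (hσ₂' : ∀ x ∈ t.varFinset, x ≠ z → σ₂' x = σ₂ x) (v₀ : β → M) :
    encodingDenotation t (fun x => (σ₁ x).realize v₀) (fun x => (σ₂ x).realize v₀) =
      encodingDenotation (t.subst (decompositionSubst z f ζ))
        (fun x => (σ₁' x).realize v₀) (fun x => (σ₂' x).realize v₀) := by
  have realize_preserved {σ σ' : α → L.Term β} {s : Fin n → L.Term β}
      (hσ : σ z = Term.func f s) (hσ'ζ : ∀ i, σ' (ζ i) = s i)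
      (hσ' : ∀ x ∈ t.varFinset, x ≠ z → σ' x = σ x) :
      (t.subst (decompositionSubst z f ζ)).realize (fun x => (σ' x).realize v₀) =
        t.realize (fun x => (σ x).realize v₀) :=
    realize_subst_decompositionSubst (by simp only [hσ, hσ'ζ, Term.realize_func])
      fun x hx hxz => by rw [hσ' x hx hxz]
  rw [encodingDenotation_eq_pair, encodingDenotation_eq_pair,
    realize_preserved hσ₁ hσ₁'ζ hσ₁', realize_preserved hσ₂ hσ₂'ζ hσ₂']

end

/-- Lemma 1 (semantic form): one step of Plotkin's decomposition rule produces an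
equivalent matching-logic encoding. -/
theorem plotkin_step_equiv_encoding (L : FirstOrder.Language) {β : Type*}
    (t : L.Term ℕ) (σ₁ σ₂ : ℕ → L.Term β) (z : ℕ) (n : ℕ) (f : L.Functions n)
    (u v : Fin n → L.Term β)
    (hσ₁ : σ₁ z = Term.func f u) (hσ₂ : σ₂ z = Term.func f v)
    (ζ : Fin n → ℕ) (hζinj : Function.Injective ζ)
    (hζfresh : ∀ i, ζ i ∉ t.varFinset)
    (t' : L.Term ℕ)
    (ht' : t' = t.subst
      (fun x => if x = z then Term.func f (fun i => Term.var (ζ i)) else Term.var x))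
    (σ₁' σ₂' : ℕ → L.Term β)
    (hσ₁'ζ : ∀ i, σ₁' (ζ i) = u i) (hσ₂'ζ : ∀ i, σ₂' (ζ i) = v i)
    (hσ₁' : ∀ x ∈ t.varFinset, x ≠ z → σ₁' x = σ₁ x)
    (hσ₂' : ∀ x ∈ t.varFinset, x ≠ z → σ₂' x = σ₂ x)
    (M : Type*) [L.Structure M] (v₀ : β → M) :
    {m : M | ∃ w : ℕ → M,
        ((∀ x ∈ t.varFinset, w x = (σ₁ x).realize v₀) ∨
          (∀ x ∈ t.varFinset, w x = (σ₂ x).realize v₀)) ∧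
        t.realize w = m} =
    {m : M | ∃ w : ℕ → M,
        ((∀ x ∈ t'.varFinset, w x = (σ₁' x).realize v₀) ∨
          (∀ x ∈ t'.varFinset, w x = (σ₂' x).realize v₀)) ∧
        t'.realize w = m} := by
  subst ht'
  exact plotkin_step_equiv_encoding_general t σ₁ σ₂ z f u v hσ₁ hσ₂ ζ σ₁' σ₂'
    hσ₁'ζ hσ₂'ζ hσ₁' hσ₂' v₀
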